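/- One-step contraction of Quantile-RaSKA in the corrupted (noiseless) case (Theorem 4.4): let λ > 0, f(x) = λ‖x‖₁ + (1/2)‖x‖², let A ∈ ℝ^{m×n} be full rank with unit-norm rows a_1ᵀ, …, a_mᵀ, let b = A x̂ + b^c where b^c has exactly βm nonzero entries, A x̂ ≠ 0, and x̂ is the unique solution of min_x f(x) subject to A x = A x̂; assume β < q < 1 − β with qm, βm integers. Let x ∈ ℝ^n with x* ∈ ∂f(x) ∩ Range(Aᵀ), let Q be the q-quantile of (|⟨a_i, x⟩ − b_i|)_{i=1}^m, let T = {i : |⟨a_i, x⟩ − b_i| < Q} and assume |T| = qm. Let γ = (1/σ̃_min(A)²)·(|x̂|_min + 2λ)/|x̂|_min, and let the stepsize w > 0 satisfy 0 < (w/(γqm))·(σ_{q−β,min}²/σ_max² − √β/√(1−q−β)) − (w²σ_max²/(γq²m²))·(1 + √β/√(1−q−β))² < 1. Define x'* = x* − (w/(qm))·Σ_{i ∈ T}(⟨a_i, x⟩ − b_i)·a_i and x' = S_λ(x'*). Then D_f^{x'*}(x', x̂) ≤ [1 − (w/(γqm))·(σ_{q−β,min}²/σ_max² − √β/√(1−q−β))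 + (w²σ_max²/(γq²m²))·(1 + √β/√(1−q−β))²]·D_f^{x*}(x, x̂). -/

import Mathlib

/-- Euclidean inner product on finite-dimensional real coordinate space. -/
noncomputable def ip {I : Type*} [Fintype I] (u v : I → ℝ) : ℝ := ∑ i, u i * v i

/-- Euclidean norm. -/
noncomputable def enorm2 {I : Type*} [Fintype I] (v : I → ℝ) : ℝ :=
  Real.sqrt (∑ i, (v i) ^ 2)

/-- ℓ₁ norm. -/
noncomputable def norm1 {I : Type*} [Fintype I] (v : I → ℝ) : ℝ := ∑ i, |v i|

/-- ℓ∞ norm. -/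
noncomputable def normInf {I : Type*} [Fintype I] (v : I → ℝ) : ℝ := ⨆ i, |v i|

/-- Subdifferential of a convex function. -/
def subdiff {I : Type*} [Fintype I] (f : (I → ℝ) → ℝ) (x : I → ℝ) : Set (I → ℝ) :=
  {g | ∀ y, f y ≥ f x + ip g (y - x)}

/-- Bregman distance `D_f^{g}(x, y)` with respect to `f` and subgradient `g ∈ ∂f(x)`. -/
noncomputable def breg {I : Type*} [Fintype I] (f : (I → ℝ) → ℝ) (g x y : I → ℝ) : ℝ :=
  f y - f x - ip g (y - x)

/-- Fenchel conjugate. -/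
noncomputable def fconj {I : Type*} [Fintype I] (f : (I → ℝ) → ℝ) (u : I → ℝ) : ℝ :=
  ⨆ z, (ip u z - f z)

/-- Soft shrinkage (soft thresholding) operator. -/
noncomputable def softShrink {I : Type*} [Fintype I] (lam : ℝ) (x : I → ℝ) : I → ℝ :=
  fun i => Real.sign (x i) * max (|x i| - lam) 0

/-- Smallest singular value `σ_min(M) = inf_{x ≠ 0} ‖Mx‖/‖x‖`. -/
noncomputable def sigmaMin {I J : Type*} [Fintype I] [Fintype J] (M : Matrix I J ℝ) : ℝ :=
  sInf {r | ∃ x : J → ℝ, x ≠ 0 ∧ r = enorm2 (M.mulVec x) / enorm2 x}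

/-- Largest singular value `σ_max(M) = sup_{x ≠ 0} ‖Mx‖/‖x‖`. -/
noncomputable def sigmaMax {I J : Type*} [Fintype I] [Fintype J] (M : Matrix I J ℝ) : ℝ :=
  sSup {r | ∃ x : J → ℝ, x ≠ 0 ∧ r = enorm2 (M.mulVec x) / enorm2 x}

/-- Frobenius norm. -/
noncomputable def frobNorm {I J : Type*} [Fintype I] [Fintype J] (M : Matrix I J ℝ) : ℝ :=
  Real.sqrt (∑ i, ∑ j, (M i j) ^ 2)

/-- `‖A‖_{1,2} = sqrt (∑ i ‖a_i‖₁²)` where `a_iᵀ` are the rows of `A`. -/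
noncomputable def norm12 {m n : ℕ} (A : Matrix (Fin m) (Fin n) ℝ) : ℝ :=
  Real.sqrt (∑ i, (norm1 (A i)) ^ 2)

/-- Column submatrix `A_J`. -/
noncomputable def colSub {m n : ℕ} (A : Matrix (Fin m) (Fin n) ℝ) (J : Finset (Fin n)) :
    Matrix (Fin m) {j // j ∈ J} ℝ := A.submatrix id Subtype.val

/-- Row submatrix `A_I`. -/
noncomputable def rowSub {m n : ℕ} (A : Matrix (Fin m) (Fin n) ℝ) (I : Finset (Fin m)) :
    Matrix {i // i ∈ I} (Fin n) ℝ := A.submatrix Subtype.val id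

/-- Submatrix `A_{I,J}` with rows in `I` and columns in `J`. -/
noncomputable def subMat {m n : ℕ} (A : Matrix (Fin m) (Fin n) ℝ)
    (I : Finset (Fin m)) (J : Finset (Fin n)) :
    Matrix {i // i ∈ I} {j // j ∈ J} ℝ := A.submatrix Subtype.val Subtype.val

/-- `σ̃_min(A) = min{σ_min(A_J) : J ⊆ {1,…,n}, A_J ≠ 0}`. -/
noncomputable def sigmaTildeMin {m n : ℕ} (A : Matrix (Fin m) (Fin n) ℝ) : ℝ :=
  sInf {r | ∃ J : Finset (Fin n), colSub A J ≠ 0 ∧ r = sigmaMin (colSub A J)}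

/-- `σ̃_{q−β,min}(A)` (with `k = (q−β)m`): min of `σ_min(A_{I,J})` over `|I| = k` and
`J` nonempty. -/
noncomputable def sigmaTildeQBMin {m n : ℕ} (A : Matrix (Fin m) (Fin n) ℝ) (k : ℕ) : ℝ :=
  sInf {r | ∃ (I : Finset (Fin m)) (J : Finset (Fin n)),
    I.card = k ∧ J.Nonempty ∧ r = sigmaMin (subMat A I J)}

/-- Variant of `σ̃_{q−β,min}(A)` requiring moreover `A_J ≠ 0`. -/
noncomputable def sigmaTildeQBMin' {m n : ℕ} (A : Matrix (Fin m) (Fin n) ℝ) (k : ℕ) : ℝ :=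
  sInf {r | ∃ (I : Finset (Fin m)) (J : Finset (Fin n)),
    I.card = k ∧ J.Nonempty ∧ colSub A J ≠ 0 ∧ r = sigmaMin (subMat A I J)}

/-- `σ_{q−β,min}(A)` (with `k = (q−β)m`): min of `σ_min(A_I)` over `|I| = k`. -/
noncomputable def sigmaQBMin {m n : ℕ} (A : Matrix (Fin m) (Fin n) ℝ) (k : ℕ) : ℝ :=
  sInf {r | ∃ I : Finset (Fin m), I.card = k ∧ r = sigmaMin (rowSub A I)}

/-- The increasingly sorted rearrangement `y_(1) ≤ … ≤ y_(m)` of a finite tuple. -/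
noncomputable def sortedVal {m : ℕ} (y : Fin m → ℝ) : Fin m → ℝ := y ∘ Tuple.sort y

/-- The `q`-quantile of `y_1, …, y_m` in the case where `qm = k` is an integer:
`(y_(k) + y_(k+1))/2` (1-indexed). -/
noncomputable def quantileAt {m : ℕ} (k : ℕ) (y : Fin m → ℝ) : ℝ :=
  if h : 0 < k ∧ k < m then
    (sortedVal y ⟨k - 1, by omega⟩ + sortedVal y ⟨k, h.2⟩) / 2
  else 0

/-- `|x̂|_min = min{|x̂_j| : x̂_j ≠ 0}`. -/
noncomputable def xminOf {n : ℕ} (xhat : Fin n → ℝ) : ℝ :=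
  sInf {r | ∃ j, xhat j ≠ 0 ∧ r = |xhat j|}

theorem enorm2_sq {I : Type*} [Fintype I] (v : I → ℝ) : enorm2 v ^ 2 = ∑ i, v i ^ 2 :=
  Real.sq_sqrt (Finset.sum_nonneg fun _ _ => sq_nonneg _)

theorem enorm2_nonneg {I : Type*} [Fintype I] (v : I → ℝ) : 0 ≤ enorm2 v := Real.sqrt_nonneg _

theorem enorm2_pos {I : Type*} [Fintype I] {v : I → ℝ} (h : v ≠ 0) : 0 < enorm2 v := by
  obtain ⟨i, hi⟩ := Function.ne_iff.mp h
  refine Real.sqrt_pos.mpr ?_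
  refine Finset.sum_pos' (fun _ _ => sq_nonneg _) ⟨i, Finset.mem_univ _, ?_⟩
  have : v i ≠ 0 := hi
  positivity

theorem sigmaMin_nonneg {I J : Type*} [Fintype I] [Fintype J] (M : Matrix I J ℝ) :
    0 ≤ sigmaMin M := by
  refine Real.sInf_nonneg ?_
  rintro r ⟨x, _, rfl⟩
  exact div_nonneg (enorm2_nonneg _) (enorm2_nonneg _)

theorem sigmaMin_mul_le {I J : Type*} [Fintype I] [Fintype J] (M : Matrix I J ℝ) (x : J → ℝ) :
    sigmaMin M ^ 2 * enorm2 x ^ 2 ≤ enorm2 (M.mulVec x) ^ 2 := by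
  by_cases hx : x = 0
  · subst hx
    have : enorm2 (0 : J → ℝ) = 0 := by simp [enorm2]
    rw [this]; simp [sq_nonneg]
  · have hp := enorm2_pos hx
    have h1 : sigmaMin M ≤ enorm2 (M.mulVec x) / enorm2 x := by
      refine csInf_le ⟨0, ?_⟩ ⟨x, hx, rfl⟩
      rintro r ⟨x, _, rfl⟩
      exact div_nonneg (enorm2_nonneg _) (enorm2_nonneg _)
    rw [le_div_iff₀ hp] at h1
    rw [← mul_pow]
    exact pow_le_pow_left₀ (mul_nonneg (sigmaMin_nonneg M) hp.le) h1 2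

theorem mulVec_sq_le {I J : Type*} [Fintype I] [Fintype J] (M : Matrix I J ℝ) (x : J → ℝ) :
    enorm2 (M.mulVec x) ^ 2 ≤ (∑ i, ∑ j, M i j ^ 2) * enorm2 x ^ 2 := by
  rw [enorm2_sq, enorm2_sq, Finset.sum_mul]
  exact Finset.sum_le_sum fun i _ => Finset.sum_mul_sq_le_sq_mul_sq _ _ _

theorem sigmaMax_bound {I J : Type*} [Fintype I] [Fintype J] (M : Matrix I J ℝ) (x : J → ℝ) :
    enorm2 (M.mulVec x) ^ 2 ≤ sigmaMax M ^ 2 * enorm2 x ^ 2 := by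
  by_cases hx : x = 0
  · subst hx
    have h0 : enorm2 (0 : J → ℝ) = 0 := by simp [enorm2]
    have h1 : enorm2 (0 : I → ℝ) = 0 := by simp [enorm2]
    simp [h0, h1]
  · have hp := enorm2_pos hx
    have h1 : enorm2 (M.mulVec x) / enorm2 x ≤ sigmaMax M := by
      refine le_csSup ⟨Real.sqrt (∑ i, ∑ j, M i j ^ 2), ?_⟩ ⟨x, hx, rfl⟩
      rintro r ⟨y, hy, rfl⟩
      have hy' := enorm2_pos hy
      refine Real.le_sqrt_of_sq_le ?_
      rw [div_pow, div_le_iff₀ (by positivity)]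
      exact mulVec_sq_le M y
    rw [div_le_iff₀ hp] at h1
    rw [← mul_pow]
    exact pow_le_pow_left₀ (enorm2_nonneg _) h1 2

/-- transposed bound -/
theorem sum_smul_bound {m n : ℕ} (A : Matrix (Fin m) (Fin n) ℝ) (T : Finset (Fin m))
    (r : Fin m → ℝ) :
    ∑ j, (∑ i ∈ T, r i * A i j) ^ 2 ≤ sigmaMax A ^ 2 * ∑ i ∈ T, r i ^ 2 := by
  set v : Fin n → ℝ := fun j => ∑ i ∈ T, r i * A i j with hv
  have hV : ∑ j, v j ^ 2 = ∑ i ∈ T, r i * (A.mulVec v) i := by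
    simp only [Matrix.mulVec, dotProduct, Finset.mul_sum]
    rw [Finset.sum_comm]
    refine Finset.sum_congr rfl fun j _ => ?_
    rw [sq]
    conv_lhs => rw [hv]
    simp only [Finset.sum_mul]
    refine Finset.sum_congr rfl fun i _ => ?_
    simp only [hv]; ring
  have h1 := Finset.sum_mul_sq_le_sq_mul_sq T r (A.mulVec v)
  rw [← hV] at h1
  have h2 : ∑ i ∈ T, (A.mulVec v) i ^ 2 ≤ sigmaMax A ^ 2 * ∑ j, v j ^ 2 := by
    rw [← enorm2_sq v]
    refine le_trans ?_ (sigmaMax_bound A v)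
    rw [enorm2_sq]
    exact Finset.sum_le_sum_of_subset_of_nonneg (Finset.subset_univ _) fun _ _ _ => sq_nonneg _
  have hR : 0 ≤ ∑ i ∈ T, r i ^ 2 := Finset.sum_nonneg fun _ _ => sq_nonneg _
  have hN : 0 ≤ ∑ j, v j ^ 2 := Finset.sum_nonneg fun _ _ => sq_nonneg _
  change ∑ j, v j ^ 2 ≤ _
  rcases hN.eq_or_lt with h0 | h0
  · rw [← h0]; positivity
  · have h3 := h1.trans (mul_le_mul_of_nonneg_left h2 hR)
    refine le_of_mul_le_mul_right ?_ h0
    nlinarith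

theorem sub_scalar {lam x s t : ℝ} (hlam : 0 < lam)
    (h : ∀ t, lam * |t| + 1/2 * t^2 ≥ lam * |x| + 1/2 * x^2 + s * (t - x)) :
    lam * |t| ≥ lam * |x| + (s - x) * (t - x) := by
  by_contra! hc
  set δ := lam * |x| + (s - x) * (t - x) - lam * |t| with hδ
  have hδ0 : 0 < δ := by linarith
  set c := 1/2 * (t - x)^2 with hcd
  have hc0 : 0 ≤ c := by positivity
  set θ := δ / (δ + c) with hθ
  have hθ0 : 0 < θ := by positivity
  have hθ1 : θ ≤ 1 := by rw [hθ, div_le_one (by positivity)]; linarith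
  have hθe : θ * (δ + c) = δ := by rw [hθ]; field_simp
  have h1 := h (x + θ * (t - x))
  have h2 : |x + θ * (t - x)| ≤ (1 - θ) * |x| + θ * |t| := by
    have : x + θ * (t - x) = (1 - θ) * x + θ * t := by ring
    rw [this]
    refine (abs_add_le _ _).trans ?_
    rw [abs_mul, abs_mul, abs_of_nonneg hθ0.le, abs_of_nonneg (sub_nonneg.mpr hθ1)]
  have h3 := mul_le_mul_of_nonneg_left h2 hlam.le
  have h4 : θ * δ ≤ θ * (θ * c) := by
    rw [hδ, hcd]; nlinarith
  have h5 := le_of_mul_le_mul_left h4 hθ0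
  nlinarith

theorem f_eq {n : ℕ} (lam : ℝ) (y : Fin n → ℝ) :
    lam * norm1 y + (1 / 2) * enorm2 y ^ 2 = ∑ j, (lam * |y j| + 1/2 * y j ^ 2) := by
  rw [enorm2_sq, norm1, Finset.mul_sum, Finset.mul_sum, Finset.sum_add_distrib]

theorem sub_coord {n : ℕ} {lam : ℝ} (hlam : 0 < lam) {f : (Fin n → ℝ) → ℝ}
    (hf : f = fun x => lam * norm1 x + (1 / 2) * enorm2 x ^ 2)
    {x xs : Fin n → ℝ} (hxs : xs ∈ subdiff f x) (j : Fin n) (t : ℝ) :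
    lam * |t| ≥ lam * |x j| + (xs j - x j) * (t - x j) := by
  refine sub_scalar hlam fun t => ?_
  have h := hxs (Function.update x j t)
  simp only [hf, f_eq, ip] at h
  rw [← Finset.add_sum_erase _ _ (Finset.mem_univ j),
    ← Finset.add_sum_erase _ (fun j => lam * |x j| + 1/2 * x j ^ 2) (Finset.mem_univ j),
    ← Finset.add_sum_erase _ (fun i => xs i * (Function.update x j t - x) i)
      (Finset.mem_univ j)] at h
  have e1 : ∑ i ∈ Finset.univ.erase j, (lam * |Function.update x j t i|
      + 1/2 * Function.update x j t i ^ 2)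
      = ∑ i ∈ Finset.univ.erase j, (lam * |x i| + 1/2 * x i ^ 2) := by
    refine Finset.sum_congr rfl fun i hi => ?_
    rw [Function.update_of_ne (Finset.ne_of_mem_erase hi)]
  have e2 : ∑ i ∈ Finset.univ.erase j, xs i * (Function.update x j t - x) i = 0 := by
    refine Finset.sum_eq_zero fun i hi => ?_
    simp [Function.update_of_ne (Finset.ne_of_mem_erase hi)]
  rw [e1, e2] at h
  simp only [Function.update_self, Pi.sub_apply] at h
  linarith

theorem breg_step {n : ℕ} {lam : ℝ} (hlam : 0 < lam) {f : (Fin n → ℝ) → ℝ}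
    (hf : f = fun x => lam * norm1 x + (1 / 2) * enorm2 x ^ 2)
    {x xs : Fin n → ℝ} (hxs : xs ∈ subdiff f x) (x' xs' xh : Fin n → ℝ) :
    breg f xs' x' xh ≤ breg f xs x xh + ∑ j, (xs' j - xs j) * (x j - xh j)
      + 1/2 * ∑ j, (xs' j - xs j)^2 := by
  simp only [breg, hf, f_eq, ip, Finset.mul_sum, ← Finset.sum_sub_distrib,
    ← Finset.sum_add_distrib]
  refine Finset.sum_le_sum fun j _ => ?_
  have h := sub_coord hlam hf hxs j (x' j)
  simp only [Pi.sub_apply]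
  nlinarith [sq_nonneg (xs' j - xs j - (x' j - x j))]

theorem breg_bound {n : ℕ} {lam : ℝ} (hlam : 0 < lam) {f : (Fin n → ℝ) → ℝ}
    (hf : f = fun x => lam * norm1 x + (1 / 2) * enorm2 x ^ 2)
    {x xs : Fin n → ℝ} (hxs : xs ∈ subdiff f x) (xh : Fin n → ℝ) {μ : ℝ} (hμ : 0 < μ)
    (hle : ∀ j, xh j ≠ 0 → μ ≤ |xh j|) :
    breg f xs x xh ≤ (μ + 2 * lam) / μ * ∑ j, (x j - xh j) ^ 2 := by
  simp only [breg, hf, f_eq, ip, Finset.mul_sum, ← Finset.sum_sub_distrib]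
  refine Finset.sum_le_sum fun j _ => ?_
  have h0 := sub_coord hlam hf hxs j 0
  have h2 := sub_coord hlam hf hxs j (2 * x j)
  have hn := sub_coord hlam hf hxs j (- xh j)
  simp only [Pi.sub_apply]
  generalize xs j = u at *
  have hle := hle j
  generalize x j = a at *
  generalize xh j = c at *
  rw [abs_neg] at hn
  rw [abs_mul, abs_two] at h2
  rw [abs_zero] at h0
  have hs : (u - a) * a = lam * |a| := by linarith
  have key : lam * |c| - (u - a) * c ≤ 2 * lam / μ * (a - c)^2 := by
    by_cases hc : c = 0
    · subst hc; simp; positivity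
    have hμc := hle hc
    rcases lt_or_ge 0 (a * c) with hac | hac
    · have : lam * |c| - (u - a) * c = 0 := by
        rcases pos_and_pos_or_neg_and_neg_of_mul_pos hac with ⟨ha, hc⟩ | ⟨ha, hc⟩
        · rw [abs_of_pos ha] at hs
          rw [abs_of_pos hc, mul_right_cancel₀ ha.ne' hs]; ring
        · rw [abs_of_neg ha] at hs
          have : (u - a) = -lam := mul_right_cancel₀ ha.ne (by linarith)
          rw [abs_of_neg hc, this]; ring
      rw [this]; positivity
    · have h3 : lam * |c| - (u - a) * c ≤ 2 * lam * |c| := by linarith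
      have h4 : μ * |c| ≤ (a - c)^2 := by
        have : μ * |c| ≤ |c| * |c| := mul_le_mul_of_nonneg_right hμc (abs_nonneg _)
        rw [abs_mul_abs_self] at this
        nlinarith [sq_nonneg a]
      refine h3.trans ?_
      rw [div_mul_eq_mul_div, le_div_iff₀ hμ]
      nlinarith
  have : (μ + 2 * lam) / μ = 1 + 2 * lam / μ := by field_simp
  rw [this]
  nlinarith [sq_nonneg (a - c)]

theorem sigmaTilde_bound {m n : ℕ} (A : Matrix (Fin m) (Fin n) ℝ) (hA : A ≠ 0)
    (e : Fin n → ℝ) : sigmaTildeMin A ^ 2 * ∑ j, e j ^ 2 ≤ ∑ i, (A.mulVec e) i ^ 2 := by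
  have hnn : 0 ≤ sigmaTildeMin A := by
    refine Real.sInf_nonneg ?_
    rintro r ⟨J, _, rfl⟩
    exact sigmaMin_nonneg _
  have h1 : sigmaTildeMin A ≤ sigmaMin (colSub A Finset.univ) := by
    refine csInf_le ⟨0, ?_⟩ ⟨Finset.univ, ?_, rfl⟩
    · rintro r ⟨J, _, rfl⟩
      exact sigmaMin_nonneg _
    · intro h
      apply hA
      ext i j
      exact congrFun (congrFun h i) ⟨j, Finset.mem_univ j⟩
  have h2 := sigmaMin_mul_le (colSub A Finset.univ) (fun j => e j.1)
  have e1 : enorm2 (fun j : {j // j ∈ (Finset.univ : Finset (Fin n))} => e j.1) ^ 2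
      = ∑ j, e j ^ 2 := by
    rw [enorm2_sq]
    exact Finset.sum_coe_sort Finset.univ (fun j => e j ^ 2)
  have e2 : (colSub A Finset.univ).mulVec (fun j => e j.1) = A.mulVec e := by
    ext i
    simp only [Matrix.mulVec, dotProduct, colSub, Matrix.submatrix_apply, id]
    exact Finset.sum_coe_sort Finset.univ (fun j => A i j * e j)
  rw [e1, e2, enorm2_sq] at h2
  refine le_trans ?_ h2
  gcongr

theorem sigmaQB_bound {m n : ℕ} (A : Matrix (Fin m) (Fin n) ℝ) (k : ℕ) (I : Finset (Fin m))
    (hI : k ≤ I.card)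
    (e : Fin n → ℝ) : sigmaQBMin A k ^ 2 * ∑ j, e j ^ 2 ≤ ∑ i ∈ I, (A.mulVec e) i ^ 2 := by
  obtain ⟨I', hI', hc⟩ := Finset.exists_subset_card_eq hI
  have hnn : 0 ≤ sigmaQBMin A k := by
    refine Real.sInf_nonneg ?_
    rintro r ⟨J, _, rfl⟩
    exact sigmaMin_nonneg _
  have h1 : sigmaQBMin A k ≤ sigmaMin (rowSub A I') := by
    refine csInf_le ⟨0, ?_⟩ ⟨I', hc, rfl⟩
    rintro r ⟨J, _, rfl⟩
    exact sigmaMin_nonneg _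
  have h2 := sigmaMin_mul_le (rowSub A I') e
  have e2 : enorm2 ((rowSub A I').mulVec e) ^ 2 = ∑ i ∈ I', (A.mulVec e) i ^ 2 := by
    rw [enorm2_sq]
    exact Finset.sum_coe_sort I' (fun i => (A.mulVec e) i ^ 2)
  rw [e2, enorm2_sq] at h2
  calc _ ≤ sigmaMin (rowSub A I') ^ 2 * ∑ j, e j ^ 2 := by gcongr
    _ ≤ _ := h2
    _ ≤ _ := Finset.sum_le_sum_of_subset_of_nonneg hI' fun _ _ _ => sq_nonneg _

set_option maxHeartbeats 1000000

/-- Theorem 4.4, one-step contraction of Quantile-RaSKA in the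
corrupted noiseless case. -/
theorem stmt16 {m n : ℕ} (lam : ℝ) (hlam : 0 < lam)
    (f : (Fin n → ℝ) → ℝ)
    (hf : f = fun x => lam * norm1 x + (1 / 2) * enorm2 x ^ 2)
    (A : Matrix (Fin m) (Fin n) ℝ)
    (hrank : A.rank = min m n) (hrows : ∀ i, enorm2 (A i) = 1)
    (q β : ℝ) (hβq : β < q) (hq : q < 1 - β)
    (kq kb kqb : ℕ)
    (hkq : (kq : ℝ) = q * m) (hkb : (kb : ℝ) = β * m) (hkqb : (kqb : ℝ) = (q - β) * m)
    (xhat : Fin n → ℝ) (hAx : A.mulVec xhat ≠ 0)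
    (hmin : ∀ z, A.mulVec z = A.mulVec xhat → z ≠ xhat → f xhat < f z)
    (bc : Fin m → ℝ)
    (hbc : (Finset.univ.filter (fun i => bc i ≠ 0)).card = kb)
    (b : Fin m → ℝ) (hb : b = A.mulVec xhat + bc)
    (γ : ℝ)
    (hγ : γ = (1 / (sigmaTildeMin A) ^ 2) * ((xminOf xhat + 2 * lam) / xminOf xhat))
    (x xs : Fin n → ℝ) (hxs : xs ∈ subdiff f x)
    (hrange : ∃ u : Fin m → ℝ, xs = A.transpose.mulVec u)
    (Q : ℝ) (hQ : Q = quantileAt kq (fun i => |ip (A i) x - b i|))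
    (T : Finset (Fin m)) (hT : T = Finset.univ.filter (fun i => |ip (A i) x - b i| < Q))
    (hTcard : T.card = kq)
    (w : ℝ) (hw : 0 < w)
    -- stepsize condition (4.6)
    (hcond1 : 0 <
      (w / (γ * q * m)) *
          ((sigmaQBMin A kqb) ^ 2 / (sigmaMax A) ^ 2 -
            Real.sqrt β / Real.sqrt (1 - q - β)) -
        (w ^ 2 * (sigmaMax A) ^ 2 / (γ * q ^ 2 * m ^ 2)) *
          (1 + Real.sqrt β / Real.sqrt (1 - q - β)) ^ 2)
    (hcond2 :
      (w / (γ * q * m)) *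
          ((sigmaQBMin A kqb) ^ 2 / (sigmaMax A) ^ 2 -
            Real.sqrt β / Real.sqrt (1 - q - β)) -
        (w ^ 2 * (sigmaMax A) ^ 2 / (γ * q ^ 2 * m ^ 2)) *
          (1 + Real.sqrt β / Real.sqrt (1 - q - β)) ^ 2 < 1)
    (xs' x' : Fin n → ℝ)
    (hxs' : xs' = xs - (w / (q * m)) • ∑ i ∈ T, (ip (A i) x - b i) • A i)
    (hx' : x' = softShrink lam xs') :
    breg f xs' x' xhat ≤
      (1 -
          (w / (γ * q * m)) *
            ((sigmaQBMin A kqb) ^ 2 / (sigmaMax A) ^ 2 -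
              Real.sqrt β / Real.sqrt (1 - q - β)) +
          (w ^ 2 * (sigmaMax A) ^ 2 / (γ * q ^ 2 * m ^ 2)) *
            (1 + Real.sqrt β / Real.sqrt (1 - q - β)) ^ 2) *
        breg f xs x xhat := by
  have hA0 : A ≠ 0 := by rintro rfl; simp at hAx
  have hm : 0 < m := by
    rcases Nat.eq_zero_or_pos m with h | h
    · subst h; exact absurd (Subsingleton.elim _ _) hAx
    · exact h
  have hmR : (0 : ℝ) < m := by exact_mod_cast hm
  have hβ0 : 0 ≤ β := by
    have : 0 ≤ β * m := hkb ▸ Nat.cast_nonneg kb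
    exact nonneg_of_mul_nonneg_left this hmR
  have hq0 : 0 < q := lt_of_le_of_lt hβ0 hβq
  have hp0 : 0 < 1 - q - β := by linarith
  set ρ := Real.sqrt β / Real.sqrt (1 - q - β) with hρ
  have hρ0 : 0 ≤ ρ := by positivity
  have hρ2 : ρ ^ 2 * (1 - q - β) = β := by
    rw [hρ, div_pow, Real.sq_sqrt hβ0, Real.sq_sqrt hp0.le]; field_simp
  set σ := sigmaMax A with hσ
  set σq := sigmaQBMin A kqb with hσq
  set s := w / (q * m) with hs
  have hs0 : 0 < s := by positivity
  set K := s * (σq ^ 2 / σ ^ 2 - ρ) - s ^ 2 * σ ^ 2 * (1 + ρ) ^ 2 with hK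
  have hKγ : (w / (γ * q * m)) * (σq ^ 2 / σ ^ 2 - ρ) -
        (w ^ 2 * σ ^ 2 / (γ * q ^ 2 * m ^ 2)) * (1 + ρ) ^ 2 = K / γ := by
    have a1 : w / (γ * q * m) = s / γ := by rw [hs, div_div]; congr 1; ring
    have a2 : w ^ 2 * σ ^ 2 / (γ * q ^ 2 * m ^ 2) = s ^ 2 * σ ^ 2 / γ := by
      rw [hs, div_pow, div_mul_eq_mul_div, div_div]; congr 1; ring
    rw [a1, a2, hK]; ring
  have hx0 : 0 ≤ xminOf xhat := by
    refine Real.sInf_nonneg ?_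
    rintro r ⟨j, _, rfl⟩
    exact abs_nonneg _
  have hγ0 : 0 ≤ γ := by rw [hγ]; positivity
  rw [hKγ] at hcond1
  have hγne : γ ≠ 0 := by
    intro h; rw [h, div_zero] at hcond1; exact lt_irrefl _ hcond1
  have hγp : 0 < γ := lt_of_le_of_ne hγ0 hγne.symm
  have hKp : 0 < K := by
    have := mul_pos hcond1 hγp
    rwa [div_mul_cancel₀ _ hγne] at this
  have hxp : 0 < xminOf xhat := by
    refine lt_of_le_of_ne hx0 fun h => hγne ?_
    rw [hγ, ← h]; simp
  have hσt : sigmaTildeMin A ^ 2 ≠ 0 := by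
    intro h; apply hγne; rw [hγ, h]; simp
  have hσtp : 0 < sigmaTildeMin A ^ 2 := lt_of_le_of_ne (sq_nonneg _) hσt.symm
  set e : Fin n → ℝ := x - xhat with he
  set N := ∑ i, (A.mulVec e) i ^ 2 with hN
  have hN0 : 0 ≤ N := Finset.sum_nonneg fun _ _ => sq_nonneg _
  set E := ∑ j, e j ^ 2 with hE
  have hE0 : 0 ≤ E := Finset.sum_nonneg fun _ _ => sq_nonneg _
  -- error bound
  have hD : breg f xs x xhat ≤ γ * N := by
    have h1 := breg_bound hlam hf hxs xhat hxp (fun j hj => by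
      refine csInf_le ⟨0, ?_⟩ ⟨j, hj, rfl⟩
      rintro r ⟨j, _, rfl⟩
      exact abs_nonneg _)
    have h2 := sigmaTilde_bound A hA0 e
    refine h1.trans ?_
    have h3 : E ≤ 1 / sigmaTildeMin A ^ 2 * N := by
      rw [one_div, inv_mul_eq_div, le_div_iff₀ hσtp]; linarith
    change _ * E ≤ _
    calc _ ≤ (xminOf xhat + 2 * lam) / xminOf xhat * (1 / sigmaTildeMin A ^ 2 * N) := by gcongr
      _ = γ * N := by rw [hγ]; ring
  -- residuals
  set r : Fin m → ℝ := fun i => ip (A i) x - b i with hr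
  have hr' : ∀ i, r i = (A.mulVec e) i - bc i := by
    intro i
    simp only [hr, hb, he, Matrix.mulVec_sub, Pi.add_apply, Pi.sub_apply]
    simp only [ip, Matrix.mulVec, dotProduct]; ring
  set g : Fin m → ℝ := A.mulVec e with hg
  set G := T.filter (fun i => bc i = 0) with hGd
  set B := T.filter (fun i => ¬ bc i = 0) with hBd
  have hBc : B.card ≤ kb := by
    rw [← hbc]
    exact Finset.card_le_card (Finset.filter_subset_filter _ (Finset.subset_univ _))
  have hGB : G.card + B.card = kq := by
    rw [← hTcard]; exact Finset.card_filter_add_card_filter_not _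
  have hkk : kqb + kb = kq := by
    have : (kqb : ℝ) + kb = kq := by rw [hkqb, hkb, hkq]; ring
    exact_mod_cast this
  have hGc : kqb ≤ G.card := by omega
  have hrG : ∀ i ∈ G, r i = g i := by
    intro i hi; rw [hr', (Finset.mem_filter.mp hi).2, sub_zero]
  have hsplit : ∀ h : Fin m → ℝ, ∑ i ∈ T, h i = ∑ i ∈ G, h i + ∑ i ∈ B, h i := fun h =>
    (Finset.sum_filter_add_sum_filter_not T _ h).symm
  have hsub : ∀ S : Finset (Fin m), ∑ i ∈ S, g i ^ 2 ≤ N := fun S =>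
    Finset.sum_le_sum_of_subset_of_nonneg (Finset.subset_univ _) fun _ _ _ => sq_nonneg _
  have hmemT : ∀ i, i ∈ T ↔ |r i| < Q := by
    intro i; rw [hT]; simp [hr]
  have hkq0 : 0 < kq := by
    have : (0 : ℝ) < kq := by rw [hkq]; positivity
    exact_mod_cast this
  have hQ0 : 0 < Q := by
    obtain ⟨i, hi⟩ := Finset.card_pos.mp (hTcard ▸ hkq0)
    exact lt_of_le_of_lt (abs_nonneg _) ((hmemT i).mp hi)
  -- bound on Q
  have hQN : (1 - q - β) * m * Q ^ 2 ≤ N := by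
    set C := (Finset.univ \ T).filter (fun i => bc i = 0) with hC
    have hCc : m ≤ C.card + kq + kb := by
      have h1 : C.card + ((Finset.univ \ T).filter (fun i => ¬ bc i = 0)).card
          = (Finset.univ \ T).card := Finset.card_filter_add_card_filter_not _
      have h2 : ((Finset.univ \ T).filter (fun i => ¬ bc i = 0)).card ≤ kb := by
        rw [← hbc]
        exact Finset.card_le_card (Finset.filter_subset_filter _ (Finset.subset_univ _))
      have h3 : (Finset.univ \ T).card + T.card = m := by
        rw [Finset.card_sdiff_add_card_eq_card (Finset.subset_univ _), Finset.card_univ,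
          Fintype.card_fin]
      omega
    have hCR : (1 - q - β) * m ≤ (C.card : ℝ) := by
      have : (m : ℝ) ≤ C.card + kq + kb := by exact_mod_cast hCc
      rw [hkq, hkb] at this; linarith
    calc _ ≤ (C.card : ℝ) * Q ^ 2 := by gcongr
      _ = ∑ i ∈ C, Q ^ 2 := by simp
      _ ≤ ∑ i ∈ C, g i ^ 2 := by
        refine Finset.sum_le_sum fun i hi => ?_
        rw [hC, Finset.mem_filter, Finset.mem_sdiff] at hi
        have h1 : Q ≤ |r i| := not_lt.mp fun h => hi.1.2 ((hmemT i).mpr h)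
        rw [hr', hi.2, sub_zero] at h1
        rw [← sq_abs (g i)]
        exact pow_le_pow_left₀ hQ0.le h1 2
      _ ≤ N := hsub C
  have hBr : ∑ i ∈ B, r i ^ 2 ≤ ρ ^ 2 * N := by
    calc _ ≤ ∑ i ∈ B, Q ^ 2 := by
          refine Finset.sum_le_sum fun i hi => ?_
          rw [← sq_abs (r i)]
          exact pow_le_pow_left₀ (abs_nonneg _) ((hmemT i).mp (Finset.mem_filter.mp hi).1).le 2
      _ = (B.card : ℝ) * Q ^ 2 := by simp
      _ ≤ (kb : ℝ) * Q ^ 2 := by gcongr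
      _ = ρ ^ 2 * ((1 - q - β) * m * Q ^ 2) := by
        rw [hkb]; linear_combination (-(m : ℝ) * Q ^ 2) * hρ2
      _ ≤ _ := by gcongr
  have hGr : ∑ i ∈ G, r i ^ 2 = ∑ i ∈ G, g i ^ 2 :=
    Finset.sum_congr rfl fun i hi => by rw [hrG i hi]
  have hGrg : ∑ i ∈ G, r i * g i = ∑ i ∈ G, g i ^ 2 :=
    Finset.sum_congr rfl fun i hi => by rw [hrG i hi, sq]
  have hTr : ∑ i ∈ T, r i ^ 2 ≤ (1 + ρ) ^ 2 * N := by
    rw [hsplit, hGr]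
    have h1 := hsub G
    have h2 := mul_nonneg hρ0 hN0
    have h3 : (1 + ρ) ^ 2 * N = N + ρ ^ 2 * N + 2 * (ρ * N) := by ring
    rw [h3]; linarith only [h1, h2, hBr]
  have hBrg : -(ρ * N) ≤ ∑ i ∈ B, r i * g i := by
    have h1 := Finset.sum_mul_sq_le_sq_mul_sq B r g
    have h2 : (∑ i ∈ B, r i * g i) ^ 2 ≤ (ρ * N) ^ 2 := by
      calc _ ≤ _ := h1
        _ ≤ (ρ ^ 2 * N) * N :=
          mul_le_mul hBr (hsub B) (Finset.sum_nonneg fun _ _ => sq_nonneg _) (by positivity)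
        _ = _ := by ring
    exact (abs_le_of_sq_le_sq' h2 (by positivity)).1
  have hGg : σq ^ 2 / σ ^ 2 * N ≤ ∑ i ∈ G, g i ^ 2 := by
    have h1 : σq ^ 2 * E ≤ _ := sigmaQB_bound A kqb G hGc e
    have h2 := sigmaMax_bound A e
    rw [enorm2_sq, enorm2_sq] at h2
    change N ≤ σ ^ 2 * E at h2
    refine le_trans ?_ h1
    rcases (sq_nonneg σ).eq_or_lt with h0 | h0
    · rw [← h0]; simp; positivity
    · rw [div_mul_eq_mul_div, div_le_iff₀ h0]
      linarith only [mul_le_mul_of_nonneg_left h2 (sq_nonneg σq)]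
  have hlin : (σq ^ 2 / σ ^ 2 - ρ) * N ≤ ∑ i ∈ T, r i * g i := by
    rw [hsplit, hGrg]; linarith
  have hquad := sum_smul_bound A T r
  -- the step
  have hd : ∀ j, xs' j - xs j = -s * ∑ i ∈ T, r i * A i j := by
    intro j
    rw [hxs']
    simp [Finset.sum_apply, hr]
  have hstep := breg_step hlam hf hxs x' xs' xhat
  have e1 : ∑ j, (xs' j - xs j) * (x j - xhat j) = -s * ∑ i ∈ T, r i * g i := by
    simp only [hd, hg, Matrix.mulVec, dotProduct, Finset.mul_sum, Finset.sum_mul]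
    rw [Finset.sum_comm]
    refine Finset.sum_congr rfl fun i _ => Finset.sum_congr rfl fun j _ => ?_
    simp only [he, Pi.sub_apply]; ring
  have e2 : ∑ j, (xs' j - xs j) ^ 2 = s ^ 2 * ∑ j, (∑ i ∈ T, r i * A i j) ^ 2 := by
    rw [Finset.mul_sum]
    exact Finset.sum_congr rfl fun j _ => by rw [hd]; ring
  rw [e1, e2] at hstep
  have hq2 : ∑ j, (∑ i ∈ T, r i * A i j) ^ 2 ≤ σ ^ 2 * ((1 + ρ) ^ 2 * N) :=
    hquad.trans (mul_le_mul_of_nonneg_left hTr (sq_nonneg _))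
  have hl2 := mul_le_mul_of_nonneg_left hlin hs0.le
  have hq3 := mul_le_mul_of_nonneg_left hq2 (sq_nonneg s)
  have hfin : breg f xs' x' xhat ≤ breg f xs x xhat - K * N := by
    have : 0 ≤ s ^ 2 * (σ ^ 2 * ((1 + ρ) ^ 2 * N)) := by positivity
    have hKN : K * N = s * ((σq ^ 2 / σ ^ 2 - ρ) * N)
        - s ^ 2 * (σ ^ 2 * ((1 + ρ) ^ 2 * N)) := by rw [hK]; ring
    rw [hKN]; linarith only [this, hstep, hl2, hq3]
  have hKD : K / γ * breg f xs x xhat ≤ K * N := by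
    calc _ ≤ K / γ * (γ * N) := by gcongr
      _ = K * N := by field_simp
  linear_combination hfin + hKD + (breg f xs x xhat) * hKγ
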